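/- For all integers n ≥ 3 and q ≥ 2, we have n·Φ*_n(q) ≥ Φ_n(q). -/

import Mathlib

/-- `Phi n q` is the `n`-th cyclotomic polynomial evaluated at `q`. -/
noncomputable def Phi (n q : ℕ) : ℕ :=
  ((Polynomial.cyclotomic n ℤ).eval (q : ℤ)).toNat

/-- `PhiStar n q` is the largest divisor of `Phi n q` that is coprime to
`∏_{k=1}^{n-1} (q^k - 1)` (an empty product is `1`). -/
noncomputable def PhiStar (n q : ℕ) : ℕ :=
  sSup {m : ℕ | m ∣ Phi n q ∧ Nat.Coprime m (∏ k ∈ Finset.Ico 1 n, (q ^ k - 1))}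

/-!
Let `p` be a prime factor of `Φ_n(q)` and write `n = p ^ v * m` with `p ∤ m`. In characteristic `p`
the polynomial `Φ_n` is a power of `Φ_m`, so `q` has order exactly `m` modulo `p`. Hence, if `p`
also divides some `q ^ k - 1` with `1 ≤ k < n`, then `m ≠ n` and so `p ∣ n`. But a prime `p ∣ n`
divides `Φ_n(q)` at most once when `n > 2`: for odd `p`, `Φ_n(q)` divides the geometric sum of
length `p` in `q ^ (n / p) ≡ 1 [ZMOD p]`, which is congruent to `p` modulo `p ^ 2`; for `p = 2` the
order `m` is `1`, so `n` is a power of `2` and `Φ_n(q) = 1 + q ^ (n / 2)` is one more than a square.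
Therefore `Φ_n(q) / gcd(Φ_n(q), n)` is coprime to every `q ^ k - 1` with `1 ≤ k < n`.
-/

section GeomSum

open Polynomial

variable {R : Type*} [CommRing R]

theorem cyclotomic_mul_dvd_geom_sum {d e : ℕ} (hd : 0 < d) (he : 1 < e) :
    cyclotomic (d * e) R ∣ ∑ i ∈ Finset.range e, (X ^ d) ^ i := by
  have hregular : IsLeftRegular (X ^ d - 1 : R[X]) :=
    (monic_X_pow_sub_C (1 : R) hd.ne').isRegular.left
  have hproper : d ∈ (d * e).properDivisors :=
    Nat.mem_properDivisors.2 ⟨dvd_mul_right d e, lt_mul_of_one_lt_right hd he⟩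
  obtain ⟨f, hf⟩ := X_pow_sub_one_mul_cyclotomic_dvd_X_pow_sub_one_of_dvd R hproper
  refine ⟨f, hregular ?_⟩
  calc
    (X ^ d - 1 : R[X]) * ∑ i ∈ Finset.range e, (X ^ d) ^ i
    _ = X ^ (d * e) - 1 := by rw [mul_geom_sum, pow_mul]
    _ = (X ^ d - 1) * (cyclotomic (d * e) R * f) := by rw [hf, mul_assoc]

theorem sq_dvd_geom_sum_sub_of_odd {m : ℕ} (hm : Odd m) {x : R} (hx : (m : R) ∣ x - 1) :
    (m : R) ^ 2 ∣ (∑ i ∈ Finset.range m, x ^ i) - m := by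
  obtain ⟨b, hb⟩ := hx
  obtain rfl : x = 1 + m * b := by rw [← hb, add_sub_cancel]
  simpa only [one_pow, mul_one] using odd_sq_dvd_geom_sum₂_sub 1 b hm

end GeomSum

section PrimeFactor

open Polynomial

variable {n p : ℕ} {a : ℤ}

theorem isPrimitiveRoot_ordCompl_of_dvd_eval_cyclotomic [hp : Fact p.Prime] (hn : n ≠ 0)
    (h : (p : ℤ) ∣ (cyclotomic n ℤ).eval a) :
    IsPrimitiveRoot (a : ZMod p) (ordCompl[p] n) := by
  have : NeZero ((ordCompl[p] n : ℕ) : ZMod p) :=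
    ⟨fun h0 => Nat.not_dvd_ordCompl hp.out hn ((ZMod.natCast_eq_zero_iff _ _).1 h0)⟩
  rw [← isRoot_cyclotomic_prime_pow_mul_iff_of_charP (p := p) (k := n.factorization p),
    Nat.ordProj_mul_ordCompl_eq_self, IsRoot.def,
    ← map_cyclotomic_int, eval_intCast_map, eq_intCast]
  exact (ZMod.intCast_zmod_eq_zero_iff_dvd _ _).2 h

theorem dvd_pow_sub_one_iff_of_dvd_eval_cyclotomic (hp : p.Prime) (hn : n ≠ 0)
    (h : (p : ℤ) ∣ (cyclotomic n ℤ).eval a) (k : ℕ) :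
    (p : ℤ) ∣ a ^ k - 1 ↔ ordCompl[p] n ∣ k := by
  have : Fact p.Prime := ⟨hp⟩
  rw [← (isPrimitiveRoot_ordCompl_of_dvd_eval_cyclotomic hn h).pow_eq_one_iff_dvd,
    ← ZMod.intCast_zmod_eq_zero_iff_dvd, Int.cast_sub, Int.cast_pow, Int.cast_one, sub_eq_zero]

theorem ordCompl_dvd_sub_one_of_dvd_eval_cyclotomic (hp : p.Prime) (hn : n ≠ 0)
    (h : (p : ℤ) ∣ (cyclotomic n ℤ).eval a) : ordCompl[p] n ∣ p - 1 := by
  have : Fact p.Prime := ⟨hp⟩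
  have hroot := isPrimitiveRoot_ordCompl_of_dvd_eval_cyclotomic hn h
  rw [hroot.eq_orderOf]
  exact ZMod.orderOf_dvd_card_sub_one (hroot.isUnit (Nat.ordCompl_pos p hn).ne').ne_zero

theorem dvd_of_dvd_eval_cyclotomic_of_dvd_pow_sub_one (hp : p.Prime)
    (h : (p : ℤ) ∣ (cyclotomic n ℤ).eval a) {k : ℕ} (hk : 0 < k) (hkn : k < n)
    (hpk : (p : ℤ) ∣ a ^ k - 1) : p ∣ n := by
  by_contra hpn
  have hdvd : ordCompl[p] n ∣ k :=
    (dvd_pow_sub_one_iff_of_dvd_eval_cyclotomic hp hkn.ne_bot h k).1 hpk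
  rw [(Nat.ordCompl_eq_self_iff_zero_or_not_dvd n hp).2 (Or.inr hpn)] at hdvd
  exact hkn.not_ge (Nat.le_of_dvd hk hdvd)

theorem not_sq_dvd_eval_cyclotomic_of_odd (hp : p.Prime) (hodd : Odd p) (hn : n ≠ 0)
    (hpn : p ∣ n) : ¬(p : ℤ) ^ 2 ∣ (cyclotomic n ℤ).eval a := by
  intro hsq
  obtain ⟨d, rfl⟩ := hpn
  have hdvd : ordCompl[p] (p * d) ∣ d :=
    (Nat.coprime_ordCompl hp hn).symm.dvd_of_dvd_mul_left (Nat.ordCompl_dvd (p * d) p)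
  have hmod : (p : ℤ) ∣ a ^ d - 1 :=
    (dvd_pow_sub_one_iff_of_dvd_eval_cyclotomic hp hn
      ((dvd_pow_self _ two_ne_zero).trans hsq) d).2 hdvd
  have heval : (cyclotomic (p * d) ℤ).eval a ∣ ∑ i ∈ Finset.range p, (a ^ d) ^ i := by
    simpa only [mul_comm d, eval_finsetSum, eval_pow, eval_X] using
      eval_dvd (x := a) (cyclotomic_mul_dvd_geom_sum (R := ℤ)
        (Nat.pos_of_ne_zero (right_ne_zero_of_mul hn)) hp.one_lt)
  have hsq_dvd : (p : ℤ) ^ 2 ∣ p :=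
    (dvd_sub_right (hsq.trans heval)).1 (sq_dvd_geom_sum_sub_of_odd hodd hmod)
  have hle : p ^ 2 ≤ p := Nat.le_of_dvd hp.pos (by exact_mod_cast hsq_dvd)
  exact hle.not_gt (lt_self_pow₀ hp.one_lt one_lt_two)

theorem not_four_dvd_eval_cyclotomic (hn : 2 < n) :
    ¬(4 : ℤ) ∣ (cyclotomic n ℤ).eval a := by
  intro hfour
  have hone : ordCompl[2] n = 1 := Nat.dvd_one.1 <|
    ordCompl_dvd_sub_one_of_dvd_eval_cyclotomic Nat.prime_two hn.ne_bot
      (dvd_trans (by norm_num) hfour)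
  obtain ⟨j, rfl⟩ : ∃ j, n = 2 ^ (j + 2) := by
    have hpow := Nat.ordProj_mul_ordCompl_eq_self n 2
    rw [hone, mul_one] at hpow
    have hexp : 1 < n.factorization 2 := (Nat.pow_lt_pow_iff_right one_lt_two).1 (by rwa [hpow])
    obtain ⟨j, hj⟩ := Nat.exists_eq_add_of_le' hexp
    exact ⟨j, by rw [← hj, hpow]⟩
  have heval : (cyclotomic (2 ^ (j + 2)) ℤ).eval a = 1 + (a ^ 2 ^ j) ^ 2 := by
    rw [cyclotomic_prime_pow_eq_geom_sum Nat.prime_two, ← pow_mul, ← pow_succ]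
    simp [Finset.sum_range_succ]
  have hsq_ne : ∀ x : ZMod 4, 1 + x ^ 2 ≠ 0 := by decide
  apply hsq_ne (a ^ 2 ^ j : ℤ)
  exact_mod_cast (ZMod.intCast_zmod_eq_zero_iff_dvd _ 4).2 (heval ▸ hfour)

theorem not_sq_dvd_eval_cyclotomic (hp : p.Prime) (hn : 2 < n) (hpn : p ∣ n) :
    ¬(p : ℤ) ^ 2 ∣ (cyclotomic n ℤ).eval a := by
  rcases hp.eq_two_or_odd' with rfl | hodd
  · exact not_four_dvd_eval_cyclotomic hn
  · exact not_sq_dvd_eval_cyclotomic_of_odd hp hodd hn.ne_bot hpn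

end PrimeFactor

section Phi

variable {n q : ℕ}

theorem natCast_phi (hq : 1 ≤ q) : (Phi n q : ℤ) = (Polynomial.cyclotomic n ℤ).eval (q : ℤ) :=
  Int.toNat_of_nonneg (Polynomial.cyclotomic_nonneg n (by exact_mod_cast hq))

theorem phi_pos (hq : 1 < q) : 0 < Phi n q :=
  Int.lt_toNat.2 (Polynomial.cyclotomic_pos' n (by exact_mod_cast hq))

theorem le_phiStar {m : ℕ} (hpos : 0 < Phi n q) (hm : m ∣ Phi n q)
    (hcop : m.Coprime (∏ k ∈ Finset.Ico 1 n, (q ^ k - 1))) : m ≤ PhiStar n q :=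
  le_csSup ⟨Phi n q, fun _ hx => Nat.le_of_dvd hpos hx.1⟩ ⟨hm, hcop⟩

theorem coprime_phi_div_gcd (hn : 2 < n) (hq : 1 ≤ q) :
    (Phi n q / (Phi n q).gcd n).Coprime (∏ k ∈ Finset.Ico 1 n, (q ^ k - 1)) := by
  refine Nat.Coprime.prod_right fun k hk => Nat.coprime_of_dvd fun p hp hpdiv hpk => ?_
  obtain ⟨hk0, hkn⟩ := Finset.mem_Ico.1 hk
  have hgcd : (Phi n q).gcd n ∣ Phi n q := Nat.gcd_dvd_left _ _
  have hpΦ : p ∣ Phi n q := hpdiv.trans (Nat.div_dvd_of_dvd hgcd)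
  have hpn : p ∣ n := by
    refine dvd_of_dvd_eval_cyclotomic_of_dvd_pow_sub_one (a := q) hp ?_ hk0 hkn ?_
    · rw [← natCast_phi hq]
      exact_mod_cast hpΦ
    · simpa [Nat.cast_pred (Nat.pow_pos hq)] using Int.natCast_dvd_natCast.2 hpk
  have hsq : p ^ 2 ∣ Phi n q := by
    rw [sq, ← Nat.mul_div_cancel' hgcd]
    exact mul_dvd_mul (Nat.dvd_gcd hpΦ hpn) hpdiv
  refine not_sq_dvd_eval_cyclotomic (a := q) hp hn hpn ?_
  rw [← natCast_phi hq]
  exact_mod_cast hsq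

end Phi

/-- For all `n ≥ 3` and `q ≥ 2`, `n·Φ*_n(q) ≥ Φ_n(q)`. -/
theorem n_mul_phiStar_ge (n q : ℕ) (hn : 3 ≤ n) (hq : 2 ≤ q) :
    Phi n q ≤ n * PhiStar n q := by
  have hgcd : (Phi n q).gcd n ∣ Phi n q := Nat.gcd_dvd_left _ _
  calc
    Phi n q = (Phi n q).gcd n * (Phi n q / (Phi n q).gcd n) := (Nat.mul_div_cancel' hgcd).symm
    _ ≤ n * PhiStar n q := Nat.mul_le_mul (Nat.gcd_le_right _ (by omega))
      (le_phiStar (phi_pos hq) (Nat.div_dvd_of_dvd hgcd) (coprime_phi_div_gcd hn (by omega)))
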